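/- (Theorem 3 of the paper: the Price of Anarchy of CMMI is unbounded.) For every real ε > 0 and every real B, there exist a CMMI instance together with penalty constants satisfying P_fwd > P_col > P_none > P_2 > P_1 > 2·|IK|·(T + max_{e∈ℰ} L_e), a feasible allocation a_ne that is a pure Nash equilibrium of the car-agent CMMI game of that instance, and an allocation a_so maximizing the social welfare J over all allocations, such that (|J(a_ne)| + ε) / (|J(a_so)| + ε) > B. -/

import Mathlib

noncomputable section
open scoped Classical
open Finset

/-- An allocation: `a i k` is the slot (in `𝒯 ∪ {∅}`) of car `k` at intersection `i`. -/
abbrev Alloc := ℕ → ℕ → Option ℕ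

/-- A CMMI (coordinated management of multiple intersections) instance. -/
structure CMMI where
  /-- horizon: time slots are `{0, …, T}` -/
  T : ℕ
  /-- intersections -/
  I : Finset ℕ
  /-- directed edges -/
  E : Finset (ℕ × ℕ)
  hE : ∀ e ∈ E, e.1 ∈ I ∧ e.2 ∈ I
  /-- edge lengths -/
  L : ℕ × ℕ → ℕ
  hL : ∀ e ∈ E, 1 ≤ L e
  /-- cars -/
  K : Finset ℕ
  /-- route of each car -/
  route : ℕ → List ℕ
  hlen : ∀ k ∈ K, 2 ≤ (route k).length
  hnodup : ∀ k ∈ K, (route k).Nodup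
  hmem : ∀ k ∈ K, ∀ i ∈ route k, i ∈ I
  hedge : ∀ k ∈ K, ∀ p ∈ (route k).zip (route k).tail, p ∈ E
  /-- departure times -/
  Tdep : ℕ → ℕ
  hTdep : ∀ k ∈ K, Tdep k ≤ T
  /-- crossing sets at each intersection; a path at `i` is a pair
  (incoming predecessor — `none` for the special departure path, outgoing successor). -/
  X : ℕ → Set (Set (Option ℕ × ℕ))
  /-- convention: the special departure path lies in a common crossing set with
  every path having the same outgoing edge -/
  hX : ∀ i ∈ I, ∀ p : Option ℕ × ℕ, ∃ x ∈ X i, ((none : Option ℕ), p.2) ∈ x ∧ p ∈ x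
  /-- waiting-time bound -/
  TUB : ℕ
  /-- capacity bound -/
  KUB : ℕ

namespace CMMI
variable (M : CMMI)

/-- `r_k^-`: the route without its last intersection. -/
def rminus (k : ℕ) : List ℕ := (M.route k).dropLast

/-- the consecutive pairs of the route of `k` -/
def consec (k : ℕ) : List (ℕ × ℕ) := (M.route k).zip (M.route k).tail

/-- `γ(i,k)`: the predecessor of `i` on the route of `k` (if any). -/
def pred (k i : ℕ) : Option ℕ := ((M.consec k).find? (fun p => p.2 == i)).map Prod.fst

/-- the successor of `i` on the route of `k` (if any). -/
def succ (k i : ℕ) : Option ℕ := ((M.consec k).find? (fun p => p.1 == i)).map Prod.snd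

/-- the path `p_{i,k}` of car `k` at intersection `i` (determined by its route;
for the first intersection the incoming component is `none`, the special departure path). -/
def pathOf (k i : ℕ) : Option (Option ℕ × ℕ) := (M.succ k i).map (fun j => (M.pred k i, j))

/-- a valid allocation takes slots in `𝒯 ∪ {∅}` -/
def IsAlloc (a : Alloc) : Prop := ∀ i k t, a i k = some t → t ≤ M.T

/-- waiting time `w_{i,k}` (an integer) -/
def w (a : Alloc) (i k : ℕ) : ℤ :=
  match M.pred k i with
  | none => 0
  | some j =>
    match a i k, a j k with
    | some t, some s => (t : ℤ) - ((s : ℤ) + (M.L (j, i) : ℤ))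
    | _, _ => 0

/-- delay `D_k(a)` of car `k` -/
def Dk (a : Alloc) (k : ℕ) : ℤ := ((M.rminus k).map (fun i => M.w a i k)).sum

/-- total delay `D(a)` -/
def D (a : Alloc) : ℤ := ∑ k ∈ M.K, M.Dk a k

/-- (wb) holds at `(i,k)` -/
def WBok (a : Alloc) (i k : ℕ) : Prop := 0 ≤ M.w a i k ∧ M.w a i k ≤ (M.TUB : ℤ)

/-- number of cars `k` with `(i,k) ∈ IK` and `∅ ≠ a_{i,k} ≤ t` -/
def cnt (a : Alloc) (i t : ℕ) : ℕ :=
  (M.K.filter (fun k => i ∈ M.rminus k ∧ ∃ s, a i k = some s ∧ s ≤ t)).card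

/-- (lcap) holds at time `t` and edge `e` -/
def LCapOK (a : Alloc) (t : ℕ) (e : ℕ × ℕ) : Prop :=
  (M.cnt a e.1 t : ℤ) - (M.cnt a e.2 t : ℤ) ≤ (M.KUB : ℤ)

/-- (dep) is violated for car `k` -/
def DepViol (a : Alloc) (k : ℕ) : Prop :=
  ∃ i t, (M.route k).head? = some i ∧ a i k = some t ∧ t < M.Tdep k

/-- (arr) is violated for car `k` -/
def ArrViol (a : Alloc) (k : ℕ) : Prop :=
  ∃ iω l t, (M.route k).getLast? = some iω ∧ M.pred k iω = some l ∧ a l k = some t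
    ∧ M.T < t + M.L (l, iω)

/-- (col) is violated at intersection `i` -/
def ColViolAt (a : Alloc) (i : ℕ) : Prop :=
  ∃ k ∈ M.K, ∃ k' ∈ M.K, k ≠ k' ∧ i ∈ M.rminus k ∧ i ∈ M.rminus k'
    ∧ a i k = a i k' ∧ a i k ≠ none
    ∧ ∃ p p', M.pathOf k i = some p ∧ M.pathOf k' i = some p'
      ∧ ∃ x ∈ M.X i, p ∈ x ∧ p' ∈ x

/-- (fwd) is violated somewhere on the route of `k` -/
def FwdViolK (a : Alloc) (k : ℕ) : Prop :=
  ∃ i ∈ M.rminus k, ∃ j, M.pred k i = some j ∧ a i k ≠ none ∧ a j k = none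

/-- (alloc) is violated somewhere on the route of `k` -/
def NoneViolK (a : Alloc) (k : ℕ) : Prop := ∃ i ∈ M.rminus k, a i k = none

/-- (wb) is violated somewhere on the route of `k` -/
def WBviolK (a : Alloc) (k : ℕ) : Prop := ∃ i ∈ M.rminus k, ¬ M.WBok a i k

/-- feasibility of an allocation: (wb), (lcap), (dep), (arr), (col), (fwd), (alloc) -/
def Feasible (a : Alloc) : Prop :=
  (∀ k ∈ M.K, ∀ i ∈ M.rminus k, M.WBok a i k)
  ∧ (∀ e ∈ M.E, ∀ t ≤ M.T, M.LCapOK a t e)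
  ∧ (∀ k ∈ M.K, ¬ M.DepViol a k)
  ∧ (∀ k ∈ M.K, ¬ M.ArrViol a k)
  ∧ (∀ i ∈ M.I, ¬ M.ColViolAt a i)
  ∧ (∀ k ∈ M.K, ¬ M.FwdViolK a k)
  ∧ (∀ k ∈ M.K, ¬ M.NoneViolK a k)

/-- `|IK|`, the number of allocation variables -/
def nIK : ℕ := ∑ k ∈ M.K, (M.rminus k).length

/-- `max_{e ∈ ℰ} L_e` -/
def maxL : ℕ := M.E.sup M.L

end CMMI

/-- indicator `χ` -/
def chi (P : Prop) : ℝ := if P then 1 else 0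

/-- penalty constants -/
structure Pen where
  Pfwd : ℝ
  Pcol : ℝ
  Pnone : ℝ
  P2 : ℝ
  P1 : ℝ

/-- the ordering `P_fwd > P_col > P_none > P_2 > P_1 > 0` -/
def Pen.Order (P : Pen) : Prop :=
  P.Pcol < P.Pfwd ∧ P.Pnone < P.Pcol ∧ P.P2 < P.Pnone ∧ P.P1 < P.P2 ∧ 0 < P.P1

namespace CMMI
variable (M : CMMI)

/-- utility of car `k` in the car-agent CMMI game -/
def uCar (P : Pen) (a : Alloc) (k : ℕ) : ℝ :=
  -((M.Dk a k : ℝ)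
    + P.P1 * chi (M.WBviolK a k)
    + ∑ t ∈ Finset.range (M.T + 1),
        ((M.consec k).map (fun e => P.P1 * chi (¬ M.LCapOK a t e))).sum
    + P.P2 * chi (M.DepViol a k)
    + P.P1 * chi (M.ArrViol a k)
    + ((M.rminus k).map (fun i => P.Pcol * chi (M.ColViolAt a i))).sum
    + P.Pfwd * chi (M.FwdViolK a k)
    + P.Pnone * chi (M.NoneViolK a k))

/-- social welfare `J(a)` of the car-agent game -/
def J (P : Pen) (a : Alloc) : ℝ := ∑ k ∈ M.K, M.uCar P a k

/-- deviation of car `k` to the slot vector `b` on `r_k^-` -/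
def devCar (a : Alloc) (k : ℕ) (b : ℕ → Option ℕ) : Alloc :=
  fun i k' => if k' = k ∧ i ∈ M.rminus k then b i else a i k'

/-- pure Nash equilibrium of the car-agent game -/
def IsPNEcar (P : Pen) (a : Alloc) : Prop :=
  ∀ k ∈ M.K, ∀ b : ℕ → Option ℕ, (∀ i t, b i = some t → t ≤ M.T) →
    M.uCar P (M.devCar a k b) k ≤ M.uCar P a k

end CMMI

/-!
Every car's waiting times are bounded by `T + max_e L_e` in absolute value, so the assumption
`P_1 > 2·|IK|·(T + max_e L_e)` makes breaking a constraint worse for a car than any change of its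
delay. Hence `J ≤ 0`, so that a feasible allocation without delay is a social optimum, and a
feasible allocation is an equilibrium as soon as no car can reduce its delay while respecting its
constraints.

In the instance used here, car `0` drives `0 → 1 → 2` against a convoy of `n + 1` cars driving
`1 → 0 → 2`. If the convoy starts in slot `1`, it occupies intersection `1` in the slots
`1, …, n + 1` and intersection `0` in the slots `2, …, n + 2`. As the horizon forces car `0` to
cross intersection `1` by slot `n + 2`, it can only do so in slot `n + 2`, must leave intersection
`0` by slot `1`, and so waits at least `n` slots. If the convoy starts one slot later, car `0`
slips through before it and nobody waits.
-/

lemma chi_nonneg (p : Prop) : 0 ≤ chi p := by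
  unfold chi
  split_ifs <;> norm_num

lemma mul_chi_of {p : Prop} (c : ℝ) (h : p) : c * chi p = c := by
  rw [chi, if_pos h, mul_one]

lemma chi_of_not {p : Prop} (h : ¬ p) : chi p = 0 := if_neg h

lemma le_sum_map_mul_chi {α : Type*} {l : List α} {q : α → Prop} {c : ℝ} (hc : 0 ≤ c) {x : α}
    (hx : x ∈ l) (hq : q x) : c ≤ (l.map fun y => c * chi (q y)).sum :=
  List.single_le_sum (List.forall_mem_map.2 fun _ _ => mul_nonneg hc (chi_nonneg _)) c
    (List.mem_map.2 ⟨x, hx, mul_chi_of c hq⟩)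

lemma sum_map_mul_chi_nonneg {α : Type*} (l : List α) (q : α → Prop) {c : ℝ} (hc : 0 ≤ c) :
    0 ≤ (l.map fun y => c * chi (q y)).sum :=
  List.sum_nonneg <| List.forall_mem_map.2 fun _ _ => mul_nonneg hc (chi_nonneg _)

lemma exists_mem_zip_tail_iff_mem_dropLast {α : Type*} {l : List α} {x : α} :
    (∃ y, (x, y) ∈ l.zip l.tail) ↔ x ∈ l.dropLast := by
  induction l with
  | nil => simp
  | cons z l ih =>
    cases l with
    | nil => simp
    | cons z' l =>
      simp only [List.tail_cons, List.zip_cons_cons, List.mem_cons, Prod.mk.injEq,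
        List.dropLast_cons_cons, exists_or] at ih ⊢
      rw [← ih]
      simp

lemma abs_sum_map_le_length_nsmul {α G : Type*} [AddCommGroup G] [LinearOrder G]
    [IsOrderedAddMonoid G] {l : List α} {f : α → G} {c : G} (h : ∀ x ∈ l, |f x| ≤ c) :
    |(l.map f).sum| ≤ l.length • c := by
  induction l with
  | nil => simp
  | cons x l ih =>
    simp only [List.forall_mem_cons] at h
    calc |((x :: l).map f).sum| ≤ |f x| + |(l.map f).sum| := by
          simpa only [List.map_cons, List.sum_cons] using abs_add_le _ _
      _ ≤ c + l.length • c := add_le_add h.1 (ih h.2)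
      _ = (x :: l).length • c := by rw [List.length_cons, succ_nsmul']

namespace Pen.Order

variable {P : Pen} (hP : P.Order)
include hP

lemma P1_pos : 0 < P.P1 := hP.2.2.2.2

lemma P1_le_P2 : P.P1 ≤ P.P2 := hP.2.2.2.1.le

lemma P1_le_Pnone : P.P1 ≤ P.Pnone := hP.P1_le_P2.trans hP.2.2.1.le

lemma P1_le_Pcol : P.P1 ≤ P.Pcol := hP.P1_le_Pnone.trans hP.2.1.le

lemma P1_le_Pfwd : P.P1 ≤ P.Pfwd := hP.P1_le_Pcol.trans hP.1.le

end Pen.Order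

lemma exists_pen_order_lt_P1 (c : ℝ) : ∃ P : Pen, P.Order ∧ c < P.P1 := by
  have hc := le_abs_self c
  have habs := abs_nonneg c
  refine ⟨⟨|c| + 5, |c| + 4, |c| + 3, |c| + 2, |c| + 1⟩, ⟨?_, ?_, ?_, ?_, ?_⟩, ?_⟩ <;>
    dsimp only <;> linarith

namespace CMMI

section General

variable {M : CMMI} {P : Pen} {a a' : Alloc} {i j k k' s t : ℕ}

lemma mem_consec_of_pred_eq_some (h : M.pred k i = some j) : (j, i) ∈ M.consec k := by
  obtain ⟨⟨x, y⟩, hfind, rfl⟩ := Option.map_eq_some_iff.1 h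
  have hy : y = i := by simpa using List.find?_some hfind
  exact hy ▸ List.mem_of_find?_eq_some hfind

lemma mem_rminus_of_pred_eq_some (h : M.pred k i = some j) : j ∈ M.rminus k :=
  exists_mem_zip_tail_iff_mem_dropLast.1 ⟨i, mem_consec_of_pred_eq_some h⟩

lemma exists_pathOf_eq_some (h : i ∈ M.rminus k) : ∃ p, M.pathOf k i = some p := by
  obtain ⟨j, hj⟩ := exists_mem_zip_tail_iff_mem_dropLast.2 h
  have hfind : ((M.consec k).find? (fun p => p.1 == i)).isSome :=
    List.find?_isSome.2 ⟨(i, j), hj, by simp⟩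
  obtain ⟨p, hp⟩ := Option.isSome_iff_exists.1 hfind
  exact ⟨(M.pred k i, p.2), by simp [pathOf, succ, hp]⟩

lemma mem_I_of_mem_rminus (hk : k ∈ M.K) (hi : i ∈ M.rminus k) : i ∈ M.I :=
  M.hmem k hk i (List.mem_of_mem_dropLast hi)

lemma length_rminus_le_nIK (hk : k ∈ M.K) : (M.rminus k).length ≤ M.nIK :=
  Finset.single_le_sum (f := fun k => (M.rminus k).length) (fun _ _ => Nat.zero_le _) hk

lemma w_of_pred_eq_none (h : M.pred k i = none) : M.w a i k = 0 := by
  simp only [w, h]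

lemma w_of_pred_eq_some (h : M.pred k i = some j) (ht : a i k = some t) (hs : a j k = some s) :
    M.w a i k = (t : ℤ) - (s + M.L (j, i)) := by
  simp only [w, h, ht, hs]

lemma abs_w_le (ha : M.IsAlloc a) (hk : k ∈ M.K) : |M.w a i k| ≤ M.T + M.maxL := by
  unfold w
  split
  · rw [abs_zero]
    positivity
  · rename_i j hpred
    have hL : M.L (j, i) ≤ M.maxL :=
      Finset.le_sup (f := M.L) (M.hedge k hk _ (mem_consec_of_pred_eq_some hpred))
    split
    · rename_i t s ht hs
      have htT := ha _ _ _ ht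
      have hsT := ha _ _ _ hs
      rw [abs_le]
      constructor <;> omega
    · rw [abs_zero]
      positivity

lemma abs_Dk_le (ha : M.IsAlloc a) (hk : k ∈ M.K) :
    |M.Dk a k| ≤ M.nIK * (M.T + M.maxL) :=
  calc |M.Dk a k| ≤ (M.rminus k).length • ((M.T : ℤ) + M.maxL) :=
        abs_sum_map_le_length_nsmul fun _ _ => abs_w_le ha hk
    _ ≤ M.nIK * (M.T + M.maxL) := by
        rw [nsmul_eq_mul]
        gcongr
        exact length_rminus_le_nIK hk

lemma lcapOK_of_card_le (h : M.K.card ≤ M.KUB) (a : Alloc) (t : ℕ) (e : ℕ × ℕ) :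
    M.LCapOK a t e := by
  have hcnt : M.cnt a e.1 t ≤ M.K.card := Finset.card_filter_le _ _
  unfold LCapOK
  omega

lemma not_fwdViolK_of_not_noneViolK (h : ¬ M.NoneViolK a k) : ¬ M.FwdViolK a k := by
  rintro ⟨i, -, j, hpred, -, hj⟩
  exact h ⟨j, mem_rminus_of_pred_eq_some hpred, hj⟩

lemma colViolAt_of_univ_mem (hX : Set.univ ∈ M.X i) (hk : k ∈ M.K) (hk' : k' ∈ M.K)
    (hne : k ≠ k') (hi : i ∈ M.rminus k) (hi' : i ∈ M.rminus k')
    (ht : a i k = some t) (ht' : a i k' = some t) : M.ColViolAt a i := by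
  obtain ⟨p, hp⟩ := exists_pathOf_eq_some hi
  obtain ⟨p', hp'⟩ := exists_pathOf_eq_some hi'
  exact ⟨k, hk, k', hk', hne, hi, hi', ht.trans ht'.symm, by simp [ht],
    p, p', hp, hp', Set.univ, hX, trivial, trivial⟩

lemma devCar_of_ne {b : ℕ → Option ℕ} (h : k' ≠ k) : M.devCar a k b i k' = a i k' :=
  if_neg fun hk => h hk.1

lemma IsAlloc.devCar (ha : M.IsAlloc a) {b : ℕ → Option ℕ}
    (hb : ∀ i t, b i = some t → t ≤ M.T) : M.IsAlloc (M.devCar a k b) := by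
  intro i k' t h
  unfold CMMI.devCar at h
  split_ifs at h
  exacts [hb _ _ h, ha _ _ _ h]

/-- Car `k` violates none of the constraints that its utility `u_k` penalizes: those of its own
slots, and (lcap) and (col) along its route. -/
structure CarFeasible (M : CMMI) (a : Alloc) (k : ℕ) : Prop where
  wb : ¬ M.WBviolK a k
  lcap : ∀ t ≤ M.T, ∀ e ∈ M.consec k, M.LCapOK a t e
  dep : ¬ M.DepViol a k
  arr : ¬ M.ArrViol a k
  col : ∀ i ∈ M.rminus k, ¬ M.ColViolAt a i
  fwd : ¬ M.FwdViolK a k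
  alloc : ¬ M.NoneViolK a k

lemma Feasible.carFeasible (h : M.Feasible a) (hk : k ∈ M.K) : M.CarFeasible a k := by
  obtain ⟨hwb, hlcap, hdep, harr, hcol, hfwd, halloc⟩ := h
  exact
    { wb := fun ⟨i, hi, hviol⟩ => hviol (hwb k hk i hi)
      lcap := fun t ht e he => hlcap e (M.hedge k hk e he) t ht
      dep := hdep k hk
      arr := harr k hk
      col := fun i hi => hcol i (mem_I_of_mem_rminus hk hi)
      fwd := hfwd k hk
      alloc := halloc k hk }

lemma CarFeasible.w_nonneg (h : M.CarFeasible a k) (hi : i ∈ M.rminus k) : 0 ≤ M.w a i k := by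
  by_contra hneg
  exact h.wb ⟨i, hi, fun hok => hneg hok.1⟩

lemma CarFeasible.Dk_nonneg (h : M.CarFeasible a k) : 0 ≤ M.Dk a k :=
  List.sum_nonneg <| List.forall_mem_map.2 fun _ hi => h.w_nonneg hi

lemma CarFeasible.exists_eq_some (h : M.CarFeasible a k) (hi : i ∈ M.rminus k) :
    ∃ t, a i k = some t :=
  Option.ne_none_iff_exists'.1 fun hnone => h.alloc ⟨i, hi, hnone⟩

/-- The penalty part of the utility of car `k`, so that `u_k = -(D_k + penalty)`. -/
def penalty (M : CMMI) (P : Pen) (a : Alloc) (k : ℕ) : ℝ :=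
  P.P1 * chi (M.WBviolK a k)
    + ∑ t ∈ Finset.range (M.T + 1),
        ((M.consec k).map (fun e => P.P1 * chi (¬ M.LCapOK a t e))).sum
    + P.P2 * chi (M.DepViol a k)
    + P.P1 * chi (M.ArrViol a k)
    + ((M.rminus k).map (fun i => P.Pcol * chi (M.ColViolAt a i))).sum
    + P.Pfwd * chi (M.FwdViolK a k)
    + P.Pnone * chi (M.NoneViolK a k)

lemma uCar_eq_neg_Dk_add_penalty (M : CMMI) (P : Pen) (a : Alloc) (k : ℕ) :
    M.uCar P a k = -(M.Dk a k + M.penalty P a k) := by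
  unfold uCar penalty
  ring

lemma CarFeasible.penalty_eq_zero (h : M.CarFeasible a k) : M.penalty P a k = 0 := by
  have hlcap : ∑ t ∈ Finset.range (M.T + 1),
      ((M.consec k).map (fun e => P.P1 * chi (¬ M.LCapOK a t e))).sum = 0 :=
    Finset.sum_eq_zero fun t ht => List.sum_eq_zero <| List.forall_mem_map.2 fun e he => by
      rw [chi_of_not (not_not.2 (h.lcap t (Finset.mem_range_succ_iff.1 ht) e he)), mul_zero]
  have hcol : ((M.rminus k).map (fun i => P.Pcol * chi (M.ColViolAt a i))).sum = 0 :=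
    List.sum_eq_zero <| List.forall_mem_map.2 fun i hi => by
      rw [chi_of_not (h.col i hi), mul_zero]
  rw [penalty, hlcap, hcol, chi_of_not h.wb, chi_of_not h.dep, chi_of_not h.arr,
    chi_of_not h.fwd, chi_of_not h.alloc]
  ring

lemma P1_le_penalty (hP : P.Order) (h : ¬ M.CarFeasible a k) : P.P1 ≤ M.penalty P a k := by
  have h1 := hP.P1_pos.le
  have h2 := hP.P1_le_P2
  have hcol := hP.P1_le_Pcol
  have hfwd := hP.P1_le_Pfwd
  have hnone := hP.P1_le_Pnone
  have wb_nonneg := mul_nonneg h1 (chi_nonneg (M.WBviolK a k))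
  have lcap_nonneg : ∀ t ∈ Finset.range (M.T + 1),
      0 ≤ ((M.consec k).map (fun e => P.P1 * chi (¬ M.LCapOK a t e))).sum :=
    fun t _ => sum_map_mul_chi_nonneg _ _ h1
  have lcap_sum_nonneg := Finset.sum_nonneg lcap_nonneg
  have dep_nonneg := mul_nonneg (h1.trans h2) (chi_nonneg (M.DepViol a k))
  have arr_nonneg := mul_nonneg h1 (chi_nonneg (M.ArrViol a k))
  have col_nonneg := sum_map_mul_chi_nonneg (M.rminus k) (M.ColViolAt a) (h1.trans hcol)
  have fwd_nonneg := mul_nonneg (h1.trans hfwd) (chi_nonneg (M.FwdViolK a k))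
  have none_nonneg := mul_nonneg (h1.trans hnone) (chi_nonneg (M.NoneViolK a k))
  contrapose! h
  unfold penalty at h
  exact
    { wb := fun hv => by linarith [mul_chi_of P.P1 hv]
      lcap := fun t ht e he => by
        by_contra hv
        linarith [le_sum_map_mul_chi (q := fun e => ¬ M.LCapOK a t e) h1 he hv,
          Finset.single_le_sum lcap_nonneg (Finset.mem_range_succ_iff.2 ht)]
      dep := fun hv => by linarith [mul_chi_of P.P2 hv]
      arr := fun hv => by linarith [mul_chi_of P.P1 hv]
      col := fun i hi hv => by
        linarith [le_sum_map_mul_chi (q := M.ColViolAt a) (h1.trans hcol) hi hv]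
      fwd := fun hv => by linarith [mul_chi_of P.Pfwd hv]
      alloc := fun hv => by linarith [mul_chi_of P.Pnone hv] }

lemma CarFeasible.uCar_eq (h : M.CarFeasible a k) : M.uCar P a k = -M.Dk a k := by
  rw [uCar_eq_neg_Dk_add_penalty, h.penalty_eq_zero, add_zero]

lemma uCar_le_of_not_carFeasible (hP : P.Order) (h : ¬ M.CarFeasible a k) :
    M.uCar P a k ≤ -M.Dk a k - P.P1 := by
  rw [uCar_eq_neg_Dk_add_penalty]
  linarith [P1_le_penalty hP h]

lemma Feasible.J_eq_neg_D (h : M.Feasible a) : M.J P a = -M.D a := by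
  rw [J, D, Finset.sum_congr rfl fun k hk => (h.carFeasible hk).uCar_eq]
  push_cast
  exact Finset.sum_neg_distrib _

section LargePenalties

variable (hP : P.Order) (hP1 : (2 * M.nIK * (M.T + M.maxL) : ℝ) < P.P1)
include hP1

lemma two_mul_abs_Dk_lt_P1 (ha : M.IsAlloc a) (hk : k ∈ M.K) : 2 * |(M.Dk a k : ℝ)| < P.P1 := by
  have hD : |(M.Dk a k : ℝ)| ≤ M.nIK * (M.T + M.maxL) := by exact_mod_cast abs_Dk_le ha hk
  linarith

include hP

lemma CarFeasible.uCar_lt (h : M.CarFeasible a k) (h' : ¬ M.CarFeasible a' k)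
    (ha : M.IsAlloc a) (ha' : M.IsAlloc a') (hk : k ∈ M.K) : M.uCar P a' k < M.uCar P a k :=
  calc M.uCar P a' k ≤ -M.Dk a' k - P.P1 := uCar_le_of_not_carFeasible hP h'
    _ < -M.Dk a k := by
      linarith [two_mul_abs_Dk_lt_P1 hP1 ha hk, two_mul_abs_Dk_lt_P1 hP1 ha' hk,
        le_abs_self (M.Dk a k : ℝ), neg_abs_le (M.Dk a' k : ℝ)]
    _ = M.uCar P a k := h.uCar_eq.symm

lemma uCar_nonpos (ha : M.IsAlloc a) (hk : k ∈ M.K) : M.uCar P a k ≤ 0 := by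
  by_cases h : M.CarFeasible a k
  · rw [h.uCar_eq, neg_nonpos]
    exact_mod_cast h.Dk_nonneg
  · linarith [uCar_le_of_not_carFeasible hP h, two_mul_abs_Dk_lt_P1 hP1 ha hk,
      neg_abs_le (M.Dk a k : ℝ), abs_nonneg (M.Dk a k : ℝ)]

lemma Feasible.J_le_of_D_eq_zero (h : M.Feasible a) (hD : M.D a = 0) (ha' : M.IsAlloc a') :
    M.J P a' ≤ M.J P a := by
  rw [h.J_eq_neg_D, hD, Int.cast_zero, neg_zero]
  exact Finset.sum_nonpos fun k hk => uCar_nonpos hP hP1 ha' hk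

lemma Feasible.isPNEcar_of_Dk_le (h : M.Feasible a) (ha : M.IsAlloc a)
    (hdev : ∀ k ∈ M.K, ∀ b : ℕ → Option ℕ, M.CarFeasible (M.devCar a k b) k →
      M.Dk a k ≤ M.Dk (M.devCar a k b) k) : M.IsPNEcar P a := by
  intro k hk b hb
  by_cases hcar : M.CarFeasible (M.devCar a k b) k
  · rw [hcar.uCar_eq, (h.carFeasible hk).uCar_eq, neg_le_neg_iff]
    exact_mod_cast hdev k hk b hcar
  · exact ((h.carFeasible hk).uCar_lt hP hP1 hcar ha (ha.devCar hb) hk).le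

end LargePenalties

end General

section Convoy

/-- The instance with unbounded price of anarchy: car `0` drives `0 → 1 → 2`, and the convoy of the
cars `1, …, n + 1` drives `1 → 0 → 2`. Two cars may never cross an intersection in the same slot,
and the capacity bound is the number of cars, so that it never binds. The edge `(1, 2)` has length
`2` so that the horizon admits a convoy starting one slot later, but no later crossing of
intersection `1` by car `0`. -/
def convoy (n : ℕ) : CMMI where
  T := n + 4
  I := {0, 1, 2}
  E := {(0, 1), (1, 2), (1, 0), (0, 2)}
  hE := by decide
  L := fun e => if e = (1, 2) then 2 else 1
  hL := by intro e _; split_ifs <;> norm_num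
  K := Finset.range (n + 2)
  route := fun k => if k = 0 then [0, 1, 2] else [1, 0, 2]
  hlen := by intro k _; split_ifs <;> simp
  hnodup := by intro k _; split_ifs <;> simp
  hmem := by intro k _; split_ifs <;> simp
  hedge := by intro k _; split_ifs <;> simp
  Tdep := fun _ => 0
  hTdep := by intro k _; simp
  X := fun _ => {Set.univ}
  hX := by intro i _ p; simp
  TUB := n + 4
  KUB := n + 2

variable {n s t d i k : ℕ} {a : Alloc}

lemma convoy_route_zero : (convoy n).route 0 = [0, 1, 2] := rfl

lemma convoy_route_of_ne_zero (hk : k ≠ 0) : (convoy n).route k = [1, 0, 2] := if_neg hk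

lemma mem_convoy_K : k ∈ (convoy n).K ↔ k < n + 2 := Finset.mem_range

lemma mem_convoy_rminus : i ∈ (convoy n).rminus k ↔ i = 0 ∨ i = 1 := by
  obtain rfl | hk := eq_or_ne k 0
  · simp [rminus, convoy_route_zero]
  · simp [rminus, convoy_route_of_ne_zero hk, or_comm]

lemma convoy_pred_zero_zero : (convoy n).pred 0 0 = none := by
  simp [pred, consec, convoy_route_zero]

lemma convoy_pred_zero_one : (convoy n).pred 0 1 = some 0 := by
  simp [pred, consec, convoy_route_zero]

lemma convoy_pred_zero_two : (convoy n).pred 0 2 = some 1 := by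
  simp [pred, consec, convoy_route_zero]

lemma convoy_pred_one_of_ne_zero (hk : k ≠ 0) : (convoy n).pred k 1 = none := by
  simp [pred, consec, convoy_route_of_ne_zero hk]

lemma convoy_pred_zero_of_ne_zero (hk : k ≠ 0) : (convoy n).pred k 0 = some 1 := by
  simp [pred, consec, convoy_route_of_ne_zero hk]

lemma convoy_pred_two_of_ne_zero (hk : k ≠ 0) : (convoy n).pred k 2 = some 0 := by
  simp [pred, consec, convoy_route_of_ne_zero hk]

lemma convoy_Dk_zero : (convoy n).Dk a 0 = (convoy n).w a 1 0 := by
  simp [Dk, rminus, convoy_route_zero, w_of_pred_eq_none convoy_pred_zero_zero]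

lemma convoy_Dk_of_ne_zero (hk : k ≠ 0) : (convoy n).Dk a k = (convoy n).w a 0 k := by
  simp [Dk, rminus, convoy_route_of_ne_zero hk, w_of_pred_eq_none (convoy_pred_one_of_ne_zero hk)]

lemma convoy_lcapOK (a : Alloc) (t : ℕ) (e : ℕ × ℕ) : (convoy n).LCapOK a t e :=
  lcapOK_of_card_le (Finset.card_range _).le a t e

lemma convoy_not_depViol : ¬ (convoy n).DepViol a k :=
  fun ⟨_, _, _, _, hlt⟩ => Nat.not_lt_zero _ hlt

lemma convoy_arrViol_zero_iff : (convoy n).ArrViol a 0 ↔ ∃ t, a 1 0 = some t ∧ n + 4 < t + 2 := by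
  have hT : (convoy n).T = n + 4 := rfl
  have hL : (convoy n).L (1, 2) = 2 := rfl
  simp [ArrViol, convoy_route_zero, convoy_pred_zero_two, hT, hL]

lemma convoy_arrViol_of_ne_zero_iff (hk : k ≠ 0) :
    (convoy n).ArrViol a k ↔ ∃ t, a 0 k = some t ∧ n + 4 ≤ t := by
  have hT : (convoy n).T = n + 4 := rfl
  have hL : (convoy n).L (0, 2) = 1 := rfl
  simp [ArrViol, convoy_route_of_ne_zero hk, convoy_pred_two_of_ne_zero hk, hT, hL]

/-- The slot of car `k` at intersection `i` when car `0` takes slot `s` at intersection `0` and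
slot `t` at intersection `1`, while car `k ≥ 1` starts at intersection `1` in slot `k + d` and
drives on without waiting. -/
def convoySlot (s t d i k : ℕ) : ℕ :=
  if k = 0 then (if i = 0 then s else t) else (if i = 0 then k + d + 1 else k + d)

/-- The allocation given by `convoySlot`; slots are assigned at every intersection, also where they
have no meaning, but only to the cars of `convoy n`. -/
def convoyAlloc (n s t d : ℕ) : Alloc := fun i k =>
  if k < n + 2 then some (convoySlot s t d i k) else none

lemma convoyAlloc_of_mem (hk : k ∈ (convoy n).K) :
    convoyAlloc n s t d i k = some (convoySlot s t d i k) :=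
  if_pos (mem_convoy_K.1 hk)

lemma convoyAlloc_zero_of_ne_zero (hk : k ∈ (convoy n).K) (hk0 : k ≠ 0) :
    convoyAlloc n s t d 0 k = some (k + d + 1) := by
  simp [convoyAlloc_of_mem hk, convoySlot, hk0]

lemma convoyAlloc_one_of_ne_zero (hk : k ∈ (convoy n).K) (hk0 : k ≠ 0) :
    convoyAlloc n s t d 1 k = some (k + d) := by
  simp [convoyAlloc_of_mem hk, convoySlot, hk0]

lemma convoyAlloc_isAlloc (hs : s ≤ n + 4) (ht : t ≤ n + 4) (hd : d ≤ 2) :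
    (convoy n).IsAlloc (convoyAlloc n s t d) := by
  have hT : (convoy n).T = n + 4 := rfl
  intro i k u hu
  unfold convoyAlloc convoySlot at hu
  grind

lemma convoyAlloc_w_one_zero :
    (convoy n).w (convoyAlloc n s t d) 1 0 = (t : ℤ) - (s + 1) :=
  w_of_pred_eq_some convoy_pred_zero_one rfl rfl

lemma convoyAlloc_w_zero_of_ne_zero (hk : k ∈ (convoy n).K) (hk0 : k ≠ 0) :
    (convoy n).w (convoyAlloc n s t d) 0 k = 0 := by
  have hL : (convoy n).L (1, 0) = 1 := rfl
  rw [w_of_pred_eq_some (convoy_pred_zero_of_ne_zero hk0) (convoyAlloc_zero_of_ne_zero hk hk0)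
    (convoyAlloc_one_of_ne_zero hk hk0), hL]
  push_cast
  ring

lemma convoyAlloc_Dk_zero : (convoy n).Dk (convoyAlloc n s t d) 0 = (t : ℤ) - (s + 1) := by
  rw [convoy_Dk_zero, convoyAlloc_w_one_zero]

lemma convoyAlloc_Dk_of_ne_zero (hk : k ∈ (convoy n).K) (hk0 : k ≠ 0) :
    (convoy n).Dk (convoyAlloc n s t d) k = 0 := by
  rw [convoy_Dk_of_ne_zero hk0, convoyAlloc_w_zero_of_ne_zero hk hk0]

lemma convoyAlloc_D : (convoy n).D (convoyAlloc n s t d) = (t : ℤ) - (s + 1) := by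
  rw [D, Finset.sum_eq_single_of_mem 0 (mem_convoy_K.2 (by omega))
    fun k hk hk0 => convoyAlloc_Dk_of_ne_zero hk hk0, convoyAlloc_Dk_zero]

lemma convoyAlloc_wBok (hst : s + 1 ≤ t) (ht : t ≤ n + 2) (hk : k ∈ (convoy n).K)
    (hi : i ∈ (convoy n).rminus k) : (convoy n).WBok (convoyAlloc n s t d) i k := by
  have hTUB : (convoy n).TUB = n + 4 := rfl
  unfold WBok
  rw [hTUB]
  obtain rfl | hk0 := eq_or_ne k 0 <;> obtain rfl | rfl := mem_convoy_rminus.1 hi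
  · rw [w_of_pred_eq_none convoy_pred_zero_zero]; omega
  · rw [convoyAlloc_w_one_zero]; omega
  · rw [convoyAlloc_w_zero_of_ne_zero hk hk0]; omega
  · rw [w_of_pred_eq_none (convoy_pred_one_of_ne_zero hk0)]; omega

lemma convoyAlloc_not_arrViol (ht : t ≤ n + 2) (hd : d ≤ 1) (hk : k ∈ (convoy n).K) :
    ¬ (convoy n).ArrViol (convoyAlloc n s t d) k := by
  obtain rfl | hk0 := eq_or_ne k 0
  · rw [convoy_arrViol_zero_iff, convoyAlloc_of_mem hk]
    simpa [convoySlot] using ht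
  · rw [convoy_arrViol_of_ne_zero_iff hk0, convoyAlloc_zero_of_ne_zero hk hk0]
    have := mem_convoy_K.1 hk
    simp only [Option.some.injEq, exists_eq_left', not_le]
    omega

lemma convoyAlloc_not_colViolAt (hs : s < d + 2) (ht : t < d + 1 ∨ n + 1 + d < t) :
    ¬ (convoy n).ColViolAt (convoyAlloc n s t d) i := by
  rintro ⟨k, hk, k', hk', hne, hi, -, heq, -⟩
  rw [convoyAlloc_of_mem hk, convoyAlloc_of_mem hk', Option.some_inj] at heq
  rw [mem_convoy_K] at hk hk'
  obtain rfl | rfl := mem_convoy_rminus.1 hi <;> unfold convoySlot at heq <;> grind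

lemma convoyAlloc_feasible (hst : s + 1 ≤ t) (ht : t ≤ n + 2) (hd : d ≤ 1) (hs : s < d + 2)
    (ht' : t < d + 1 ∨ n + 1 + d < t) : (convoy n).Feasible (convoyAlloc n s t d) := by
  have halloc : ∀ k ∈ (convoy n).K, ¬ (convoy n).NoneViolK (convoyAlloc n s t d) k := by
    rintro k hk ⟨i, -, hnone⟩
    simp [convoyAlloc_of_mem hk] at hnone
  exact ⟨fun k hk i hi => convoyAlloc_wBok hst ht hk hi, fun e _ t _ => convoy_lcapOK _ t e,
    fun k _ => convoy_not_depViol, fun k hk => convoyAlloc_not_arrViol ht hd hk,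
    fun i _ => convoyAlloc_not_colViolAt hs ht',
    fun k hk => not_fwdViolK_of_not_noneViolK (halloc k hk), halloc⟩

lemma CarFeasible.convoy_slot_ne (h : (convoy n).CarFeasible a 0) (hi : i ∈ (convoy n).rminus 0)
    (ht : a i 0 = some t) (hk : k ∈ (convoy n).K) (hk0 : k ≠ 0) : a i k ≠ some t := fun heq =>
  h.col i hi <| colViolAt_of_univ_mem (Set.mem_singleton _) (mem_convoy_K.2 (by omega)) hk hk0.symm
    hi (mem_convoy_rminus.2 (mem_convoy_rminus.1 hi)) ht heq

lemma le_convoy_Dk_zero_of_carFeasible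
    (ha0 : ∀ k ∈ (convoy n).K, k ≠ 0 → a 0 k = some (k + 1))
    (ha1 : ∀ k ∈ (convoy n).K, k ≠ 0 → a 1 k = some k)
    (h : (convoy n).CarFeasible a 0) : (n : ℤ) ≤ (convoy n).Dk a 0 := by
  have h0 : 0 ∈ (convoy n).rminus 0 := mem_convoy_rminus.2 (Or.inl rfl)
  have h1 : 1 ∈ (convoy n).rminus 0 := mem_convoy_rminus.2 (Or.inr rfl)
  obtain ⟨u, hu⟩ := h.exists_eq_some h0
  obtain ⟨v, hv⟩ := h.exists_eq_some h1
  have hw : (convoy n).w a 1 0 = (v : ℤ) - (u + 1) := w_of_pred_eq_some convoy_pred_zero_one hv hu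
  have huv : 0 ≤ (v : ℤ) - (u + 1) := hw ▸ h.w_nonneg h1
  have v_le : v ≤ n + 2 := by
    by_contra! hlt
    exact h.arr (convoy_arrViol_zero_iff.2 ⟨v, hv, by omega⟩)
  have v_ge : n + 2 ≤ v := by
    by_contra! hlt
    have hvK : v ∈ (convoy n).K := mem_convoy_K.2 hlt
    have hv0 : v ≠ 0 := by omega
    exact h.convoy_slot_ne h1 hv hvK hv0 (ha1 v hvK hv0)
  have u_le : u ≤ 1 := by
    by_contra! hlt
    have huK : u - 1 ∈ (convoy n).K := mem_convoy_K.2 (by omega)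
    have hu0 : u - 1 ≠ 0 := by omega
    refine h.convoy_slot_ne h0 hu huK hu0 ((ha0 (u - 1) huK hu0).trans ?_)
    rw [Nat.sub_add_cancel (by omega)]
  rw [convoy_Dk_zero, hw]
  omega

lemma convoyAlloc_isPNEcar {P : Pen} (hP : P.Order)
    (hP1 : (2 * (convoy n).nIK * ((convoy n).T + (convoy n).maxL) : ℝ) < P.P1) :
    (convoy n).IsPNEcar P (convoyAlloc n 1 (n + 2) 0) := by
  refine Feasible.isPNEcar_of_Dk_le hP hP1
    (convoyAlloc_feasible (by omega) (by omega) (by omega) (by omega) (by omega))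
    (convoyAlloc_isAlloc (by omega) (by omega) (by omega)) fun k hk b hdev => ?_
  obtain rfl | hk0 := eq_or_ne k 0
  · calc (convoy n).Dk (convoyAlloc n 1 (n + 2) 0) 0 = n := by
          rw [convoyAlloc_Dk_zero]; push_cast; ring
      _ ≤ (convoy n).Dk ((convoy n).devCar (convoyAlloc n 1 (n + 2) 0) 0 b) 0 :=
          le_convoy_Dk_zero_of_carFeasible
            (fun k hk hk0 => (devCar_of_ne hk0).trans (convoyAlloc_zero_of_ne_zero hk hk0))
            (fun k hk hk0 => (devCar_of_ne hk0).trans (convoyAlloc_one_of_ne_zero hk hk0)) hdev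
  · rw [convoyAlloc_Dk_of_ne_zero hk hk0]
    exact hdev.Dk_nonneg

end Convoy

end CMMI

theorem cmmi_poa_unbounded_general (ε B : ℝ) (hε : 0 < ε) :
    ∃ (M : CMMI) (ane aso : Alloc), M.IsAlloc ane ∧ M.Feasible ane
      ∧ M.IsAlloc aso ∧ M.Feasible aso
      ∧ ∀ P : Pen, P.Order → (2 * M.nIK * (M.T + M.maxL) : ℝ) < P.P1 →
        M.IsPNEcar P ane
        ∧ (∀ a : Alloc, M.IsAlloc a → M.J P a ≤ M.J P aso)
        ∧ B < (|M.J P ane| + ε) / (|M.J P aso| + ε) := by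
  obtain ⟨n, hn⟩ := exists_nat_gt (B * ε)
  have hne : (CMMI.convoy n).Feasible (CMMI.convoyAlloc n 1 (n + 2) 0) :=
    CMMI.convoyAlloc_feasible (by omega) (by omega) (by omega) (by omega) (by omega)
  have hso : (CMMI.convoy n).Feasible (CMMI.convoyAlloc n 0 1 1) :=
    CMMI.convoyAlloc_feasible (by omega) (by omega) (by omega) (by omega) (by omega)
  have hDne : (CMMI.convoy n).D (CMMI.convoyAlloc n 1 (n + 2) 0) = n := by
    rw [CMMI.convoyAlloc_D]; push_cast; ring
  have hDso : (CMMI.convoy n).D (CMMI.convoyAlloc n 0 1 1) = 0 := by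
    rw [CMMI.convoyAlloc_D]; norm_num
  refine ⟨CMMI.convoy n, _, _, CMMI.convoyAlloc_isAlloc (by omega) (by omega) (by omega), hne,
    CMMI.convoyAlloc_isAlloc (by omega) (by omega) (by omega), hso, fun P hP hP1 =>
    ⟨CMMI.convoyAlloc_isPNEcar hP hP1, fun a ha => hso.J_le_of_D_eq_zero hP hP1 hDso ha, ?_⟩⟩
  rw [hne.J_eq_neg_D, hso.J_eq_neg_D, hDne, hDso, Int.cast_natCast, abs_neg, Nat.abs_cast,
    Int.cast_zero, neg_zero, abs_zero, zero_add, lt_div_iff₀ hε]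
  linarith

/-- Theorem 3: the Price of Anarchy of CMMI is unbounded. For every `ε > 0` and every `B`
there are a CMMI instance, penalty constants with
`P_fwd > P_col > P_none > P_2 > P_1 > 2·|IK|·(T + max_e L_e)`, a feasible pure Nash
equilibrium `a_ne` of the car-agent game, and an allocation `a_so` maximizing the social
welfare `J` over all allocations, with `(|J(a_ne)| + ε) / (|J(a_so)| + ε) > B`. -/
theorem cmmi_poa_unbounded (ε B : ℝ) (hε : 0 < ε) :
    ∃ (M : CMMI) (P : Pen), P.Order
      ∧ (2 * M.nIK * (M.T + M.maxL) : ℝ) < P.P1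
      ∧ ∃ ane : Alloc, M.IsAlloc ane ∧ M.Feasible ane ∧ M.IsPNEcar P ane
      ∧ ∃ aso : Alloc, M.IsAlloc aso
        ∧ (∀ a : Alloc, M.IsAlloc a → M.J P a ≤ M.J P aso)
        ∧ B < (|M.J P ane| + ε) / (|M.J P aso| + ε) := by
  obtain ⟨M, ane, aso, hane, hfeas, haso, -, h⟩ := cmmi_poa_unbounded_general ε B hε
  obtain ⟨P, hP, hP1⟩ := exists_pen_order_lt_P1 (2 * M.nIK * (M.T + M.maxL))
  obtain ⟨hPNE, hmax, hratio⟩ := h P hP hP1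
  exact ⟨M, P, hP, hP1, ane, hane, hfeas, hPNE, aso, haso, hmax, hratio⟩
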